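/- With σ the suspension operation on cubical chains of S¹, the reduced cubical coproduct satisfies δ̄(σ(T)) = Σ σ(T_i) ⊗ Tⁱ, where δ(T) = Σ T_i ⊗ Tⁱ is the cubical Alexander–Whitney coproduct. -/

import Mathlib

open scoped TensorProduct
noncomputable section

/-- An `n`-cube in `X` (set-theoretic model of cubical singular theory). -/
abbrev Cube (X : Type) (n : ℕ) : Type := (Fin n → unitInterval) → X

variable (k : Type) [CommRing k]

/-- The cubical chains in degree `n`: the free `k`-module on `n`-cubes. -/
abbrev CU (X : Type) (n : ℕ) : Type := Cube X n →₀ k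

/-- A cube is degenerate if it does not depend on one of its coordinates. -/
def IsDegenerate {X : Type} {n : ℕ} (T : Cube X n) : Prop :=
  ∃ i : Fin n, ∀ (x : Fin n → unitInterval) (t : unitInterval),
    T (Function.update x i t) = T x

/-- The submodule of degenerate chains. -/
def Deg (X : Type) (n : ℕ) : Submodule k (CU k X n) :=
  Submodule.span k {c : CU k X n | ∃ T, IsDegenerate T ∧ c = Finsupp.single T 1}

/-- Reindexing of cubes along an equality of dimensions. -/
def cubeEquiv {X : Type} {n m : ℕ} (h : n = m) : Cube X n ≃ Cube X m :=
  Equiv.arrowCongr (Equiv.arrowCongr (finCongr h) (Equiv.refl unitInterval)) (Equiv.refl X)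

/-- Reindexing of cubical chains along an equality of dimensions. -/
def CUcast {X : Type} {n m : ℕ} (h : n = m) : CU k X n ≃ₗ[k] CU k X m :=
  Finsupp.domLCongr (cubeEquiv h)

/-- The shuffle sign attached to a subset `A` of the coordinates. -/
def shuffleSign (n : ℕ) (A : Finset (Fin n)) : ℤ :=
  (-1) ^ (((A ×ˢ Aᶜ).filter fun p => p.2 < p.1).card)

/-- The front face of a cube determined by a subset `A` of its coordinates:
the coordinates outside of `A` are set to `0`. -/
def frontFace {X : Type} {n p : ℕ} (A : Finset (Fin n)) (h : A.card = p) (T : Cube X n) :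
    Cube X p :=
  fun x => T fun i => if hi : i ∈ A then x ((A.orderIsoOfFin h).symm ⟨i, hi⟩) else 0

/-- The back face of a cube determined by a subset `B` of its coordinates:
the coordinates outside of `B` are set to `1`. -/
def backFace {X : Type} {n q : ℕ} (B : Finset (Fin n)) (h : B.card = q) (T : Cube X n) :
    Cube X q :=
  fun x => T fun i => if hi : i ∈ B then x ((B.orderIsoOfFin h).symm ⟨i, hi⟩) else 1

/-- The `(p, q)`-component of the cubical Alexander–Whitney coproduct. -/
def δcomp {X : Type} (p q : ℕ) : CU k X (p + q) →ₗ[k] CU k X p ⊗[k] CU k X q :=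
  Finsupp.lift (CU k X p ⊗[k] CU k X q) k (Cube X (p + q)) fun T =>
    ∑ A ∈ (Finset.univ.filter fun A : Finset (Fin (p + q)) => A.card = p).attach,
      shuffleSign (p + q) A.1 •
        (Finsupp.single (frontFace A.1 (Finset.mem_filter.mp A.2).2 T) (1 : k) ⊗ₜ[k]
          Finsupp.single (backFace A.1ᶜ
            (show A.1ᶜ.card = q by
              have h := (Finset.mem_filter.mp A.2).2
              rw [Finset.card_compl, h, Fintype.card_fin]; omega) T) (1 : k))

/-- The "power" `z ^ t` of a point of the circle, using the principal argument. -/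
def cpow (z : Circle) (t : ℝ) : Circle := Circle.exp (t * Complex.arg (z : ℂ))

/-- The suspension operation on cubes of the circle. -/
def σcube {n : ℕ} (T : Cube Circle n) : Cube Circle (n + 1) :=
  fun x => cpow (T (Fin.tail x)) (x 0 : ℝ)

/-- The suspension operation, extended linearly to cubical chains. -/
def σc (n : ℕ) : CU k Circle n →ₗ[k] CU k Circle (n + 1) :=
  Finsupp.lift (CU k Circle (n + 1)) k (Cube Circle n) fun T =>
    Finsupp.single (σcube T) 1

/-- The degenerate part of a tensor product of chain groups. -/
def DegT (X : Type) (p q : ℕ) : Submodule k (CU k X p ⊗[k] CU k X q) :=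
  LinearMap.range (TensorProduct.map (Deg k X p).subtype (LinearMap.id (M := CU k X q))) ⊔
    LinearMap.range (TensorProduct.map (LinearMap.id (M := CU k X p)) (Deg k X q).subtype)

section Faces

variable {X : Type} {n p : ℕ}

lemma frontFace_apply_eq (A : Finset (Fin n)) (h : A.card = p) (T : Cube X n)
    (x : Fin p → unitInterval) (y : Fin n → unitInterval)
    (hy : ∀ j, y (A.orderEmbOfFin h j) = x j) (hy' : ∀ i, i ∉ A → y i = 0) :
    frontFace A h T x = T y := by
  unfold frontFace
  congr 1
  funext i
  split_ifs with hi
  · rw [← hy, ← Finset.coe_orderIsoOfFin_apply, OrderIso.apply_symm_apply]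
  · exact (hy' i hi).symm

lemma backFace_apply_eq (B : Finset (Fin n)) (h : B.card = p) (T : Cube X n)
    (x : Fin p → unitInterval) (y : Fin n → unitInterval)
    (hy : ∀ j, y (B.orderEmbOfFin h j) = x j) (hy' : ∀ i, i ∉ B → y i = 1) :
    backFace B h T x = T y := by
  unfold backFace
  congr 1
  funext i
  split_ifs with hi
  · rw [← hy, ← Finset.coe_orderIsoOfFin_apply, OrderIso.apply_symm_apply]
  · exact (hy' i hi).symm

/-- The point of the cube whose image under `T` is `frontFace A h T x`. -/
lemma exists_frontFace_eq (A : Finset (Fin n)) (h : A.card = p) (x : Fin p → unitInterval) :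
    ∃ y : Fin n → unitInterval,
      (∀ j, y (A.orderEmbOfFin h j) = x j) ∧ ∀ i, i ∉ A → y i = 0 := by
  refine ⟨fun i => if hi : i ∈ A then x ((A.orderIsoOfFin h).symm ⟨i, hi⟩) else 0,
    fun j => ?_, fun i hi => dif_neg hi⟩
  refine (dif_pos (A.orderEmbOfFin_mem h j)).trans ?_
  congr 1
  rw [OrderIso.symm_apply_eq]
  rfl

/-- The point of the cube whose image under `T` is `backFace B h T x`. -/
lemma exists_backFace_eq (B : Finset (Fin n)) (h : B.card = p) (x : Fin p → unitInterval) :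
    ∃ y : Fin n → unitInterval,
      (∀ j, y (B.orderEmbOfFin h j) = x j) ∧ ∀ i, i ∉ B → y i = 1 := by
  refine ⟨fun i => if hi : i ∈ B then x ((B.orderIsoOfFin h).symm ⟨i, hi⟩) else 1,
    fun j => ?_, fun i hi => dif_neg hi⟩
  refine (dif_pos (B.orderEmbOfFin_mem h j)).trans ?_
  congr 1
  rw [OrderIso.symm_apply_eq]
  rfl

end Faces

section Succ

variable {n p : ℕ}

lemma orderEmbOfFin_map_succ (B : Finset (Fin n)) (h : B.card = p)
    (h' : (B.map (Fin.succEmb n)).card = p) (j : Fin p) :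
    (B.map (Fin.succEmb n)).orderEmbOfFin h' j = (B.orderEmbOfFin h j).succ := by
  have := Finset.orderEmbOfFin_unique h' (f := fun j => (B.orderEmbOfFin h j).succ)
    (fun j => Finset.mem_map_of_mem (Fin.succEmb n) (B.orderEmbOfFin_mem h j))
    (fun _ _ hab => Fin.succ_lt_succ_iff.mpr ((B.orderEmbOfFin h).strictMono hab))
  exact (congrFun this j).symm

lemma orderEmbOfFin_insert_zero (B : Finset (Fin n)) (h : B.card = p)
    (h' : (insert 0 (B.map (Fin.succEmb n))).card = p + 1) (j : Fin (p + 1)) :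
    (insert 0 (B.map (Fin.succEmb n))).orderEmbOfFin h' j =
      (Fin.cons 0 fun j => (B.orderEmbOfFin h j).succ : Fin (p + 1) → Fin (n + 1)) j := by
  refine (congrFun (Finset.orderEmbOfFin_unique h' (f := Fin.cons 0 fun j =>
    (B.orderEmbOfFin h j).succ) (fun j => ?_) ?_) j).symm
  · refine Fin.cases ?_ (fun j => ?_) j
    · simp
    · rw [Fin.cons_succ]
      exact Finset.mem_insert_of_mem
        (Finset.mem_map_of_mem (Fin.succEmb n) (B.orderEmbOfFin_mem h j))
  · intro a b hab
    induction b using Fin.cases with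
    | zero => exact absurd hab (Fin.not_lt_zero a)
    | succ b =>
      induction a using Fin.cases with
      | zero => exact Fin.succ_pos _
      | succ a =>
        exact Fin.succ_lt_succ_iff.mpr
          ((B.orderEmbOfFin h).strictMono (Fin.succ_lt_succ_iff.mp hab))

lemma zero_notMem_map_succ (B : Finset (Fin n)) : (0 : Fin (n + 1)) ∉ B.map (Fin.succEmb n) := by
  simp [Fin.succ_ne_zero]

lemma card_insert_zero_map_succ (B : Finset (Fin n)) :
    (insert 0 (B.map (Fin.succEmb n))).card = B.card + 1 := by
  rw [Finset.card_insert_of_notMem (zero_notMem_map_succ B), Finset.card_map]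

lemma compl_insert_zero_map_succ (B : Finset (Fin n)) :
    (insert 0 (B.map (Fin.succEmb n)))ᶜ = Bᶜ.map (Fin.succEmb n) := by
  ext i
  refine Fin.cases ?_ (fun i => ?_) i <;> simp [Fin.succ_ne_zero]

lemma shuffleSign_insert_zero (B : Finset (Fin n)) :
    shuffleSign (n + 1) (insert 0 (B.map (Fin.succEmb n))) = shuffleSign n B := by
  unfold shuffleSign
  rw [compl_insert_zero_map_succ]
  congr 1
  rw [← Finset.card_map ((Fin.succEmb n).prodMap (Fin.succEmb n))]
  congr 1
  ext ⟨i, j⟩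
  refine Fin.cases ?_ (fun i => ?_) i <;> refine Fin.cases ?_ (fun j => ?_) j <;>
    simp [Fin.succ_ne_zero]

lemma sum_finset_fin_succ {M : Type*} [AddCommMonoid M] (f : Finset (Fin (n + 1)) → M) :
    ∑ A, f A = ∑ B : Finset (Fin n), f (B.map (Fin.succEmb n)) +
      ∑ B : Finset (Fin n), f (insert 0 (B.map (Fin.succEmb n))) := by
  have h : (Finset.univ.map (Fin.succEmb n)).powerset =
      Finset.univ.map (Finset.mapEmbedding (Fin.succEmb n)).toEmbedding := by
    ext A
    simp [Finset.subset_map_iff, eq_comm]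
  rw [← Finset.powerset_univ, Fin.univ_succ, Finset.cons_eq_insert,
    Finset.sum_powerset_insert (by simp [Fin.succ_ne_zero])]
  erw [h]
  simp

end Succ

section Suspension

variable {n p : ℕ}

lemma cpow_zero (z : Circle) : cpow z 0 = 1 := by simp [cpow]

lemma cpow_one (z : Circle) : cpow z 1 = z := by simp [cpow, Circle.exp_arg]

lemma frontFace_σcube_insert_zero (B : Finset (Fin n)) (h : B.card = p)
    (h' : (insert 0 (B.map (Fin.succEmb n))).card = p + 1) (T : Cube Circle n) :
    frontFace (insert 0 (B.map (Fin.succEmb n))) h' (σcube T) = σcube (frontFace B h T) := by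
  funext x
  obtain ⟨y, hy, hy'⟩ := exists_frontFace_eq B h (Fin.tail x)
  rw [frontFace_apply_eq _ h' _ x (Fin.cons (x 0) y)]
  · simp only [σcube, Fin.tail_cons, Fin.cons_zero]
    rw [frontFace_apply_eq B h T _ y hy hy']
  · intro j
    rw [orderEmbOfFin_insert_zero B h]
    refine Fin.cases ?_ (fun j => ?_) j
    · simp
    · exact hy j
  · intro i
    refine Fin.cases ?_ (fun i hi => ?_) i
    · simp
    · rw [Fin.cons_succ]
      exact hy' i fun hB => hi (Finset.mem_insert_of_mem (Finset.mem_map_of_mem _ hB))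

lemma backFace_σcube_map_succ (C : Finset (Fin n)) (h : C.card = p)
    (h' : (C.map (Fin.succEmb n)).card = p) (T : Cube Circle n) :
    backFace (C.map (Fin.succEmb n)) h' (σcube T) = backFace C h T := by
  funext x
  obtain ⟨y, hy, hy'⟩ := exists_backFace_eq C h x
  rw [backFace_apply_eq C h T _ y hy hy', backFace_apply_eq _ h' _ x (Fin.cons 1 y)]
  · simp [σcube, cpow_one]
  · intro j
    rw [orderEmbOfFin_map_succ C h, Fin.cons_succ, hy]
  · intro i
    refine Fin.cases ?_ (fun i hi => ?_) i
    · simp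
    · rw [Fin.cons_succ]
      exact hy' i fun hC => hi (Finset.mem_map_of_mem _ hC)

lemma isDegenerate_frontFace_σcube (A : Finset (Fin (n + 1))) (hA : 0 ∉ A)
    (h : A.card = p + 1) (T : Cube Circle n) : IsDegenerate (frontFace A h (σcube T)) := by
  refine ⟨0, fun x t => ?_⟩
  simp [frontFace, σcube, hA, cpow_zero]

end Suspension

section Coproduct

variable {X : Type} {n p q : ℕ}

/-- The summand of the Alexander–Whitney coproduct indexed by a subset of the coordinates, with
value `0` when the subset does not have `p` elements. -/
def awTerm (h : n = p + q) (T : Cube X n) (A : Finset (Fin n)) : CU k X p ⊗[k] CU k X q :=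
  if hA : A.card = p then
    shuffleSign n A • (Finsupp.single (frontFace A hA T) (1 : k) ⊗ₜ[k]
      Finsupp.single (backFace Aᶜ
        (show Aᶜ.card = q by rw [Finset.card_compl, hA, Fintype.card_fin]; omega) T) (1 : k))
  else 0

lemma δcomp_single (T : Cube X (p + q)) :
    δcomp k p q (Finsupp.single T 1) = ∑ A, awTerm k rfl T A := by
  simp only [δcomp, Finsupp.lift_apply, zero_smul, Finsupp.sum_single_index, one_smul]
  rw [← Finset.sum_filter_of_ne (p := fun A : Finset (Fin (p + q)) => A.card = p),
    ← Finset.sum_attach (Finset.univ.filter _)]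
  · refine Finset.sum_congr rfl fun A _ => ?_
    rw [awTerm, dif_pos (Finset.mem_filter.mp A.2).2]
  · intro A _ hne
    by_contra hA
    exact hne (dif_neg hA)

lemma δcomp_CUcast_single (h : n = p + q) (T : Cube X n) :
    δcomp k p q (CUcast k h (Finsupp.single T 1)) = ∑ A, awTerm k h T A := by
  subst h
  rw [← δcomp_single]
  congr 1
  simp only [CUcast, Finsupp.domLCongr_single]
  rfl

lemma zsmul_tmul_single_mem_DegT {S : Cube X p} (hS : IsDegenerate S) (z : ℤ) (d : CU k X q) :
    z • (Finsupp.single S (1 : k) ⊗ₜ[k] d) ∈ DegT k X p q := by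
  rw [← Int.cast_smul_eq_zsmul k]
  exact Submodule.smul_mem _ _ (Submodule.mem_sup_left
    ⟨⟨Finsupp.single S 1, Submodule.subset_span ⟨S, hS, rfl⟩⟩ ⊗ₜ[k] d, rfl⟩)

lemma awTerm_σcube_mem_DegT (h : n + 1 = p + 1 + q) (T : Cube Circle n)
    (A : Finset (Fin (n + 1))) (hA : 0 ∉ A) :
    awTerm k h (σcube T) A ∈ DegT k Circle (p + 1) q := by
  unfold awTerm
  split_ifs with hc
  · exact zsmul_tmul_single_mem_DegT k (isDegenerate_frontFace_σcube A hA hc T) _ _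
  · exact zero_mem _

lemma σc_single (T : Cube Circle n) :
    σc k n (Finsupp.single T 1) = Finsupp.single (σcube T) 1 := by
  simp [σc]

lemma backFace_congr {B C : Finset (Fin n)} (hBC : B = C) (hB : B.card = q) (T : Cube X n) :
    backFace B hB T = backFace C (hBC ▸ hB) T := by
  subst hBC
  rfl

lemma awTerm_σcube_insert_zero (h : n + 1 = p + 1 + q) (h' : n = p + q) (T : Cube Circle n)
    (B : Finset (Fin n)) :
    awTerm k h (σcube T) (insert 0 (B.map (Fin.succEmb n))) =
      TensorProduct.map (σc k p) LinearMap.id (awTerm k h' T B) := by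
  by_cases hB : B.card = p
  · have hB' : (insert 0 (B.map (Fin.succEmb n))).card = p + 1 := by
      rw [card_insert_zero_map_succ, hB]
    rw [awTerm, awTerm, dif_pos hB, dif_pos hB', map_zsmul, TensorProduct.map_tmul, σc_single,
      LinearMap.id_apply, shuffleSign_insert_zero, frontFace_σcube_insert_zero B hB,
      backFace_congr (compl_insert_zero_map_succ B), backFace_σcube_map_succ]
  · rw [awTerm, awTerm, dif_neg hB, dif_neg (by rw [card_insert_zero_map_succ]; omega), map_zero]

lemma exists_δcomp_σc_eq (h : p + q + 1 = p + 1 + q) (c : CU k Circle (p + q)) :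
    ∃ d ∈ DegT k Circle (p + 1) q, δcomp k (p + 1) q (CUcast k h (σc k (p + q) c)) =
      d + TensorProduct.map (σc k p) (LinearMap.id (M := CU k Circle q)) (δcomp k p q c) := by
  induction c using Finsupp.induction_linear with
  | zero => exact ⟨0, zero_mem _, by simp⟩
  | add c c' hc hc' =>
    obtain ⟨d, hd, hc⟩ := hc
    obtain ⟨d', hd', hc'⟩ := hc'
    refine ⟨d + d', add_mem hd hd', ?_⟩
    simp only [map_add, hc, hc']
    exact add_add_add_comm _ _ _ _
  | single T r =>
    refine ⟨r • ∑ B : Finset (Fin (p + q)), awTerm k h (σcube T) (B.map (Fin.succEmb _)),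
      Submodule.smul_mem _ r (sum_mem fun B _ =>
        awTerm_σcube_mem_DegT k h T _ (zero_notMem_map_succ B)), ?_⟩
    rw [← mul_one r, ← smul_eq_mul, ← Finsupp.smul_single]
    simp only [map_smul, smul_eq_mul, mul_one]
    rw [← smul_add, σc_single, δcomp_CUcast_single, δcomp_single, sum_finset_fin_succ, map_sum,
      Finset.sum_congr rfl fun B _ => awTerm_σcube_insert_zero k h rfl T B]

end Coproduct

/-- Lemma, part (2): the reduced cubical coproduct satisfies
`δ̄(σ(T)) = Σ σ(T_i) ⊗ Tⁱ` where `δ(T) = Σ T_i ⊗ Tⁱ`: componentwise, for every output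
bidegree `(p+1, q)` with `q ≥ 1`, the `(p+1, q)`-component of `δ(σ c)` agrees with
`(σ ⊗ 1)` applied to the `(p, q)`-component of `δ c`, modulo degenerate chains. -/
theorem stmt13 (p q : ℕ) (hq : 1 ≤ q) (c : CU k Circle (p + q)) :
    δcomp k (p + 1) q
        (CUcast k (show p + q + 1 = p + 1 + q by omega) (σc k (p + q) c)) -
      TensorProduct.map (σc k p) (LinearMap.id (M := CU k Circle q)) (δcomp k p q c)
      ∈ DegT k Circle (p + 1) q := by
  obtain ⟨d, hd, h⟩ := exists_δcomp_σc_eq k (show p + q + 1 = p + 1 + q by omega) c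
  rwa [sub_eq_of_eq_add h]
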